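/- Let θ̂ ~ N(θ₀, V/n) in ℝᵏ with V positive definite and symmetric, g(θ) = a'θ + b with a not a scalar multiple of e₁ (the first standard basis vector), and suppose g(θ₀) ≤ 0. Define ŝ = n^{−1/2}(e₁'Ve₁)^{1/2}, the equality-imposed estimator θ̈ = θ̂ − Va(a'Va)⁻¹g(θ̂), its standard error s̈ = n^{−1/2}(e₁'Ve₁ − e₁'Va(a'Va)⁻¹a'Ve₁)^{1/2}, the threshold c̈ = (e₁'Va)⁻¹(a'Va)(ŝ − s̈)z_{1−α/2} if e₁'Va ≠ 0 and c̈ = 0 otherwise, and the interval [ℓ, u] with ℓ = e₁'θ̂ − ŝ·z_{1−α/2} if g(θ̂) ≤ c̈ and ℓ = e₁'θ̈ − s̈·z_{1−α/2} otherwise; u = e₁'θ̂ + ŝ·z_{1−α/2} if g(θ̂) ≤ −c̈ and u = e₁'θ̈ + s̈·z_{1−α/2} otherwise. Then P(e₁'θ₀ ∈ [ℓ, u]) ≥ 1 − α, with equality if g(θ₀) = 0. -/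

import Mathlib

open MeasureTheory ProbabilityTheory Matrix

/-- Standard normal CDF. -/
noncomputable def stdNormalCDF (t : ℝ) : ℝ :=
  ((gaussianReal 0 1) (Set.Iic t)).toReal

/-
Let `X = e₁'θ̂`, `G = g(θ̂)` and `ρ = Cov(X, G) / Var G`, so that `Y = X - ρ G` is the
equality-imposed estimator. The threshold satisfies `ρ c̈ = (ŝ - s̈) z`, hence for `ρ ≥ 0` each
endpoint of the interval is the smaller of the endpoints `X ∓ ŝ z` and `Y ∓ s̈ z` of the two usual
intervals; for `ρ ≤ 0` it is the larger one, and a change of sign reduces to the first case.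

Standardizing `X` and `Y` gives an exchangeable centred Gaussian pair `(x, y)`, with the bias
`δ ≥ 0` of `Y` in units of `s̈`. The interval misses when `x > z` and `y > z - δ`, or when `x < -z`
or `y < -(z + δ)`. By symmetry the second event has probability
`P(x > z) + P(x ≤ z, y > z + δ)`, so it remains to see that
`P(x > z, y > z - δ) + P(x ≤ z, y > z + δ) ≤ P(y ≥ z)`, with equality for `δ = 0`. Comparing the
two sides leaves `P(x > z, z - δ < y < z) ≤ P(x ≤ z, z < y ≤ z + δ)`. Exchanging the coordinates
maps the left-hand strip onto `{z - δ < x < z, y > z}`, and what this strip has outside the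
right-hand one lies beyond the line `x + y = 2z`, where reflection in that line, towards the
origin, increases the Gaussian measure.
-/

lemma measure_le_of_measure_sdiff_le {Ω : Type*} [MeasurableSpace Ω] {P : Measure Ω} {A B : Set Ω}
    (hA : MeasurableSet A) (hB : MeasurableSet B) (h : P (A \ B) ≤ P (B \ A)) : P A ≤ P B :=
  calc P A = P (A ∩ B) + P (A \ B) := (measure_inter_add_sdiff A hB).symm
    _ ≤ P (A ∩ B) + P (B \ A) := by gcongr
    _ = P B := by rw [Set.inter_comm, measure_inter_add_sdiff B hA]

section Symmetry

lemma map_neg_eq_self_of_isGaussian {E : Type*} [NormedAddCommGroup E] [NormedSpace ℝ E]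
    [CompleteSpace E] [MeasurableSpace E] [BorelSpace E] [SecondCountableTopology E]
    {ν : Measure E} [IsGaussian ν] (hν : ν[id] = 0) : ν.map (fun x => -x) = ν := by
  have hneg : HasGaussianLaw (fun x => -x) ν := IsGaussian.hasGaussianLaw_id.fun_neg
  have := hneg.isGaussian_map
  refine Measure.ext_of_charFunDual ?_
  ext L
  have hL : ∫ x, L x ∂ν = 0 := by
    rw [L.integral_comp_id_comm IsGaussian.integrable_id, ← map_zero L, ← hν]
    rfl
  rw [hneg.charFunDual_map_eq_fun, IsGaussian.charFunDual_eq]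
  have hVar : Var[fun x => -(L x); ν] = Var[L; ν] := variance_fun_neg
  simp [integral_neg, integral_complex_ofReal, hL, hVar]

lemma map_swap_eq_self_of_isGaussian {ν : Measure (ℝ × ℝ)} [IsGaussian ν]
    (hmean : ν[Prod.fst] = ν[Prod.snd]) (hvar : Var[Prod.fst; ν] = Var[Prod.snd; ν]) :
    ν.map Prod.swap = ν := by
  have hid : HasGaussianLaw (id : ℝ × ℝ → ℝ × ℝ) ν := IsGaussian.hasGaussianLaw_id
  have hswap : HasGaussianLaw Prod.swap ν :=
    hid.map_fun (ContinuousLinearEquiv.prodComm ℝ ℝ ℝ : ℝ × ℝ →L[ℝ] ℝ × ℝ)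
  have := hswap.isGaussian_map
  refine Measure.ext_of_charFunDual ?_
  ext L
  obtain ⟨a, b, hL⟩ : ∃ a b, ⇑L = fun p => a * p.1 + b * p.2 := by
    refine ⟨L (1, 0), L (0, 1), funext fun p => ?_⟩
    rw [mul_comm, mul_comm _ p.2, ← smul_eq_mul, ← smul_eq_mul, ← map_smul, ← map_smul, ← map_add]
    simp
  have hE : ∫ p, L p.swap ∂ν = ∫ p, L p ∂ν := by
    have hi₁ : Integrable (Prod.fst : ℝ × ℝ → ℝ) ν := hid.fst.integrable
    have hi₂ : Integrable (Prod.snd : ℝ × ℝ → ℝ) ν := hid.snd.integrable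
    simp only [hL, Prod.fst_swap, Prod.snd_swap]
    rw [integral_add (hi₂.const_mul _) (hi₁.const_mul _),
      integral_add (hi₁.const_mul _) (hi₂.const_mul _)]
    simp only [integral_const_mul, hmean]
  have hV : Var[fun p => L p.swap; ν] = Var[L; ν] := by
    have h₁ : MemLp (Prod.fst : ℝ × ℝ → ℝ) 2 ν := hid.fst.memLp_two
    have h₂ : MemLp (Prod.snd : ℝ × ℝ → ℝ) 2 ν := hid.snd.memLp_two
    simp only [hL, Prod.fst_swap, Prod.snd_swap]
    rw [variance_fun_add (h₂.const_mul _) (h₁.const_mul _),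
      variance_fun_add (h₁.const_mul _) (h₂.const_mul _)]
    simp only [variance_const_mul, covariance_const_mul_left, covariance_const_mul_right]
    rw [hvar, covariance_comm]
  rw [hswap.charFunDual_map_eq_fun, IsGaussian.charFunDual_eq, integral_complex_ofReal, hE, hV]

end Symmetry

section Reflection

lemma gaussianReal_le_preimage_reflection {m c : ℝ} {v : NNReal} (hc : m ≤ c)
    {B : Set ℝ} (hB : MeasurableSet B) (hBc : B ⊆ Set.Ici c) :
    gaussianReal m v B ≤ gaussianReal m v ((fun x => 2 * c - x) ⁻¹' B) := by
  rcases eq_or_ne v 0 with rfl | hv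
  · rw [gaussianReal_zero_var, Measure.dirac_apply' _ hB,
      Measure.dirac_apply' _ (hB.preimage (by fun_prop))]
    by_cases hm : m ∈ B
    · have hfix : 2 * c - m = m := by linarith [(hBc hm).antisymm hc]
      simp [hm, hfix]
    · simp [hm]
  rw [← Measure.map_apply (by fun_prop) hB, gaussianReal_map_const_sub,
    gaussianReal_apply _ hv, gaussianReal_apply _ hv]
  refine setLIntegral_mono' hB fun x hx => ENNReal.ofReal_le_ofReal ?_
  have hx' : c ≤ x := hBc hx
  have hsq : -(x - m) ^ 2 ≤ -(x - (2 * c - m)) ^ 2 := by nlinarith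
  rw [gaussianPDFReal, gaussianPDFReal]
  gcongr

lemma measure_le_measure_reflection_of_indepFun {Ω : Type*} [MeasurableSpace Ω] {P : Measure Ω}
    {S D : Ω → ℝ} (hS : HasGaussianLaw S P) (hD : AEMeasurable D P) (hSD : IndepFun S D P)
    {c : ℝ} (hc : P[S] ≤ c) {B : Set (ℝ × ℝ)} (hB : MeasurableSet B)
    (hBc : ∀ p ∈ B, c ≤ p.1) :
    P {ω | (S ω, D ω) ∈ B} ≤ P {ω | (2 * c - S ω, D ω) ∈ B} := by
  have := hS.isProbabilityMeasure
  have hrefl : Measurable fun p : ℝ × ℝ => (2 * c - p.1, p.2) := by fun_prop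
  have hlaw : P.map (fun ω => (S ω, D ω)) =
      (gaussianReal (P[S]) Var[S; P].toNNReal).prod (P.map D) := by
    rw [(indepFun_iff_map_prod_eq_prod_map_map hS.aemeasurable hD).1 hSD, hS.map_eq_gaussianReal]
  calc P {ω | (S ω, D ω) ∈ B}
      = P.map (fun ω => (S ω, D ω)) B :=
        (Measure.map_apply_of_aemeasurable (hS.aemeasurable.prodMk hD) hB).symm
    _ ≤ P.map (fun ω => (S ω, D ω)) ((fun p => (2 * c - p.1, p.2)) ⁻¹' B) := by
        rw [hlaw, Measure.prod_apply_symm hB, Measure.prod_apply_symm (hrefl hB)]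
        exact lintegral_mono fun d => gaussianReal_le_preimage_reflection hc
          (measurable_prodMk_right hB) fun x hx => hBc (x, d) hx
    _ = P {ω | (2 * c - S ω, D ω) ∈ B} :=
        Measure.map_apply_of_aemeasurable (hS.aemeasurable.prodMk hD) (hrefl hB)

lemma measure_le_measure_antidiagonal_reflection {ν : Measure (ℝ × ℝ)} [IsGaussian ν]
    (hmean : ν[Prod.fst] = ν[Prod.snd]) (hvar : Var[Prod.fst; ν] = Var[Prod.snd; ν])
    {c : ℝ} (hc : ν[Prod.fst] ≤ c) {B : Set (ℝ × ℝ)} (hB : MeasurableSet B)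
    (hBc : ∀ p ∈ B, 2 * c ≤ p.1 + p.2) :
    ν B ≤ ν ((fun p => (2 * c - p.2, 2 * c - p.1)) ⁻¹' B) := by
  have hid : HasGaussianLaw (id : ℝ × ℝ → ℝ × ℝ) ν := IsGaussian.hasGaussianLaw_id
  have h₁ : MemLp (Prod.fst : ℝ × ℝ → ℝ) 2 ν := hid.fst.memLp_two
  have h₂ : MemLp (Prod.snd : ℝ × ℝ → ℝ) 2 ν := hid.snd.memLp_two
  have hSD : HasGaussianLaw (fun p : ℝ × ℝ => (p.1 + p.2, p.1 - p.2)) ν :=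
    hid.map_fun (((ContinuousLinearMap.fst ℝ ℝ ℝ) + (ContinuousLinearMap.snd ℝ ℝ ℝ)).prod
      ((ContinuousLinearMap.fst ℝ ℝ ℝ) - (ContinuousLinearMap.snd ℝ ℝ ℝ)))
  have hcov : cov[Prod.fst + Prod.snd, Prod.fst - Prod.snd; ν] = 0 := by
    rw [covariance_add_left h₁ h₂ (h₁.sub h₂),
      covariance_sub_right h₁ h₁ h₂,
      covariance_sub_right h₂ h₁ h₂, covariance_self h₁.aemeasurable,
      covariance_self h₂.aemeasurable, covariance_comm, hvar]
    ring
  have hsum : ν[fun p : ℝ × ℝ => p.1 + p.2] ≤ 2 * c := by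
    rw [integral_add (h₁.integrable one_le_two) (h₂.integrable one_le_two)]
    linarith
  have hmeas : Measurable fun q : ℝ × ℝ => ((q.1 + q.2) / 2, (q.1 - q.2) / 2) := by fun_prop
  have key := measure_le_measure_reflection_of_indepFun hSD.fst hSD.snd.aemeasurable
    (hSD.indepFun_of_covariance_eq_zero hcov) hsum (hmeas hB)
    (fun q hq => by have := hBc _ hq; simp only at this; linarith)
  convert key using 2
  · ext p
    simp
  · ext p
    simp only [Set.mem_preimage, Set.mem_ofPred_eq]
    rw [show (2 * (2 * c) - (p.1 + p.2) + (p.1 - p.2)) / 2 = 2 * c - p.2 by ring,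
      show (2 * (2 * c) - (p.1 + p.2) - (p.1 - p.2)) / 2 = 2 * c - p.1 by ring]

end Reflection

section Noncoverage

variable {ν : Measure (ℝ × ℝ)} [IsGaussian ν] {c δ : ℝ}

lemma measure_Ioi_prod_Ioo_le (hmean : ν[Prod.fst] = ν[Prod.snd])
    (hvar : Var[Prod.fst; ν] = Var[Prod.snd; ν]) (hc : ν[Prod.fst] ≤ c) (δ : ℝ) :
    ν (Set.Ioi c ×ˢ Set.Ioo (c - δ) c) ≤ ν (Set.Iic c ×ˢ Set.Ioc c (c + δ)) := by
  set S := Set.Ioo (c - δ) c ×ˢ Set.Ioi c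
  set T := Set.Iic c ×ˢ Set.Ioc c (c + δ)
  have hS : MeasurableSet S := measurableSet_Ioo.prod measurableSet_Ioi
  have hT : MeasurableSet T := measurableSet_Iic.prod measurableSet_Ioc
  have hswap : ν (Set.Ioi c ×ˢ Set.Ioo (c - δ) c) = ν S := by
    rw [← Set.preimage_swap_prod, ← Measure.map_apply measurable_swap hS,
      map_swap_eq_self_of_isGaussian hmean hvar]
  have hST : ∀ p ∈ S \ T, 2 * c ≤ p.1 + p.2 := by
    rintro ⟨x, y⟩ ⟨⟨⟨hx, hxc⟩, hy⟩, hnT⟩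
    have hδy : c + δ < y := lt_of_not_ge fun h => hnT ⟨hxc.le, hy, h⟩
    simp only at hx ⊢
    linarith
  rw [hswap]
  refine measure_le_of_measure_sdiff_le hS hT <|
    (measure_le_measure_antidiagonal_reflection hmean hvar hc (hS.diff hT) hST).trans
      (measure_mono ?_)
  rintro ⟨x, y⟩ ⟨⟨⟨hy, hyc⟩, hx⟩, hnT⟩
  have hδx : c + δ < 2 * c - x := lt_of_not_ge fun h => hnT ⟨hyc.le, hx, h⟩
  simp only [Set.mem_Ioi] at hy hyc hx
  exact ⟨⟨by simp only [Set.mem_Iic]; linarith, by simp only; linarith, by simp only; linarith⟩,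
    fun h => hδx.not_gt (by linarith [h.1.1])⟩

lemma measure_shifted_tails_le (hmean : ν[Prod.fst] = ν[Prod.snd])
    (hvar : Var[Prod.fst; ν] = Var[Prod.snd; ν]) (hc : ν[Prod.fst] ≤ c) (hδ : 0 ≤ δ) :
    ν {p | c < p.1 ∧ c - δ < p.2} + ν {p | p.1 ≤ c ∧ c + δ < p.2} ≤ ν {p | c ≤ p.2} := by
  have hmeas : MeasurableSet {p : ℝ × ℝ | p.1 ≤ c ∧ c + δ < p.2} := by measurability
  rw [← measure_union ?_ hmeas]
  · refine measure_le_of_measure_sdiff_le (by measurability) (by measurability) ?_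
    refine (measure_mono ?_).trans <|
      (measure_Ioi_prod_Ioo_le hmean hvar hc δ).trans (measure_mono ?_)
    · rintro p ⟨⟨h₁, h₂⟩ | ⟨-, h₂⟩, hp⟩
      · exact ⟨h₁, h₂, not_le.1 hp⟩
      · simp only [Set.mem_ofPred_eq] at hp; linarith
    · rintro p ⟨h₁, h₂, h₃⟩
      refine ⟨h₂.le, ?_⟩
      rintro (⟨h, -⟩ | ⟨-, h⟩)
      · exact h.not_ge h₁
      · exact h.not_ge h₃
  · rw [Set.disjoint_left]
    exact fun p hp hp' => hp.1.not_ge hp'.1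

lemma measure_fst_lt_neg_or_snd_lt_neg (hν : ν[id] = 0) (c d : ℝ) :
    ν {p | p.1 < -c ∨ p.2 < -d} = ν {p | c < p.1} + ν {p | p.1 ≤ c ∧ d < p.2} := by
  have hflip : ν {p | p.1 < -c ∨ p.2 < -d} = ν {p | c < p.1 ∨ d < p.2} := by
    conv_lhs => rw [← map_neg_eq_self_of_isGaussian hν]
    rw [Measure.map_apply (by fun_prop) (by measurability)]
    simp
  have hmeas : MeasurableSet {p : ℝ × ℝ | c < p.1} := by measurability
  rw [hflip, ← measure_inter_add_sdiff _ hmeas]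
  congr 2
  · ext p; simp only [Set.mem_inter_iff, Set.mem_ofPred_eq]; tauto
  · ext p; simp only [Set.mem_sdiff, Set.mem_ofPred_eq, not_lt]; grind

/-- The event that a standardized pair of estimators makes the interval
`[min (x - r z) (y - s z), min (x + r z) (y + s z)]` miss the mean of the first estimator, where
`c` stands for `z` and `δ` for the bias of the second estimator in units of its standard error. -/
def noncoverage (c δ : ℝ) : Set (ℝ × ℝ) :=
  {p | (c < p.1 ∧ c - δ < p.2) ∨ p.1 < -c ∨ p.2 < -(c + δ)}

lemma measurableSet_noncoverage (c δ : ℝ) : MeasurableSet (noncoverage c δ) := by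
  unfold noncoverage
  measurability

lemma measure_noncoverage_le (hν : ν[id] = 0) (hvar : Var[Prod.fst; ν] = Var[Prod.snd; ν])
    (hc : 0 ≤ c) (hδ : 0 ≤ δ) :
    ν (noncoverage c δ) ≤ ν {p | c < p.1} + ν {p | c ≤ p.2} := by
  have hi : Integrable (fun p : ℝ × ℝ => p) ν := IsGaussian.integrable_id
  have h₁ : ν[Prod.fst] = 0 := (fst_integral hi).symm.trans (congrArg Prod.fst hν)
  have h₂ : ν[Prod.snd] = 0 := (snd_integral hi).symm.trans (congrArg Prod.snd hν)
  calc ν (noncoverage c δ)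
      ≤ ν {p | c < p.1 ∧ c - δ < p.2} + ν {p | p.1 < -c ∨ p.2 < -(c + δ)} :=
        measure_union_le _ _
    _ = ν {p | c < p.1} +
        (ν {p | c < p.1 ∧ c - δ < p.2} + ν {p | p.1 ≤ c ∧ c + δ < p.2}) := by
        rw [measure_fst_lt_neg_or_snd_lt_neg hν, add_left_comm]
    _ ≤ ν {p | c < p.1} + ν {p | c ≤ p.2} := by
        gcongr
        exact measure_shifted_tails_le (h₁.trans h₂.symm) hvar (h₁.trans_le hc) hδ

lemma measure_noncoverage_zero (hν : ν[id] = 0) (hc : 0 ≤ c) :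
    ν (noncoverage c 0) = ν {p | c < p.1} + ν {p | c < p.2} := by
  have hdisj : Disjoint {p : ℝ × ℝ | c < p.1 ∧ c < p.2} {p | p.1 < -c ∨ p.2 < -c} := by
    rw [Set.disjoint_left]
    rintro p ⟨h₁, h₂⟩ (h | h) <;> linarith
  have hsplit : ν {p | c < p.1 ∧ c < p.2} + ν {p | p.1 ≤ c ∧ c < p.2} = ν {p | c < p.2} := by
    rw [← measure_inter_add_sdiff {p : ℝ × ℝ | c < p.2}
      (measurableSet_lt measurable_const measurable_fst : MeasurableSet {p : ℝ × ℝ | c < p.1})]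
    congr 2 <;> ext p
    · exact and_comm
    · simp only [Set.mem_sdiff, Set.mem_ofPred_eq, not_lt, and_comm]
  have hlower : MeasurableSet ({p | p.1 < -c} ∪ {p | p.2 < -c} : Set (ℝ × ℝ)) := by measurability
  calc ν (noncoverage c 0)
      = ν {p | c < p.1 ∧ c < p.2} + ν {p | p.1 < -c ∨ p.2 < -c} := by
        rw [noncoverage, sub_zero, add_zero]
        exact measure_union hdisj hlower
    _ = ν {p | c < p.1} + ν {p | c < p.2} := by
        rw [measure_fst_lt_neg_or_snd_lt_neg hν, add_left_comm, hsplit]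

end Noncoverage

section StandardNormal

lemma measureReal_Ioi_gaussianReal (z : ℝ) :
    (gaussianReal 0 1).real (Set.Ioi z) = 1 - stdNormalCDF z := by
  rw [← Set.compl_Iic, probReal_compl_eq_one_sub measurableSet_Iic]
  rfl

lemma measureReal_Ici_gaussianReal (z : ℝ) :
    (gaussianReal 0 1).real (Set.Ici z) = 1 - stdNormalCDF z := by
  have := nullSingletonClass_gaussianReal (μ := 0) (v := 1) one_ne_zero
  rw [← measureReal_Ioi_gaussianReal, measureReal_congr Ioi_ae_eq_Ici]

lemma stdNormalCDF_neg (z : ℝ) : stdNormalCDF (-z) = 1 - stdNormalCDF z := by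
  have hneg : (gaussianReal 0 1).map (fun x => -x) = gaussianReal 0 1 := by
    rw [gaussianReal_map_neg, neg_zero]
  rw [← measureReal_Ici_gaussianReal, ← hneg, map_measureReal_apply (by fun_prop) measurableSet_Ici,
    Set.neg_preimage, Set.neg_Ici]
  rfl

lemma strictMono_stdNormalCDF : StrictMono stdNormalCDF := by
  intro x y hxy
  have hpos : 0 < (gaussianReal 0 1).real (Set.Ioc x y) :=
    ENNReal.toReal_pos (fun h => hxy.not_ge <| by
      simpa using gaussianReal_absolutelyContinuous' 0 one_ne_zero h) (measure_ne_top _ _)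
  calc stdNormalCDF x
      < (gaussianReal 0 1).real (Set.Iic x) + (gaussianReal 0 1).real (Set.Ioc x y) :=
        lt_add_of_pos_right _ hpos
    _ = stdNormalCDF y := by
        rw [← measureReal_union (Set.Iic_disjoint_Ioc le_rfl) measurableSet_Ioc,
          Set.Iic_union_Ioc_eq_Iic hxy.le]
        rfl

lemma nonneg_of_half_le_stdNormalCDF {z : ℝ} (hz : 1 / 2 ≤ stdNormalCDF z) : 0 ≤ z := by
  by_contra! hneg
  have := strictMono_stdNormalCDF (show z < -z by linarith)
  rw [stdNormalCDF_neg] at this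
  linarith

end StandardNormal

section StandardNormalPair

variable {ν : Measure (ℝ × ℝ)} [IsGaussian ν] {z δ : ℝ}

lemma integral_id_eq_zero_of_marginals (h₁ : HasLaw Prod.fst (gaussianReal 0 1) ν)
    (h₂ : HasLaw Prod.snd (gaussianReal 0 1) ν) : ν[id] = 0 := by
  have hi : Integrable (fun p : ℝ × ℝ => p) ν := IsGaussian.integrable_id
  refine Prod.ext ((fst_integral hi).trans ?_) ((snd_integral hi).trans ?_)
  · exact h₁.integral_eq.trans integral_id_gaussianReal
  · exact h₂.integral_eq.trans integral_id_gaussianReal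

lemma measureReal_noncoverage_le (h₁ : HasLaw Prod.fst (gaussianReal 0 1) ν)
    (h₂ : HasLaw Prod.snd (gaussianReal 0 1) ν) (hz : 0 ≤ z) (hδ : 0 ≤ δ) :
    ν.real (noncoverage z δ) ≤ 2 * (1 - stdNormalCDF z) := by
  have hvar : Var[Prod.fst; ν] = Var[Prod.snd; ν] := h₁.variance_eq.trans h₂.variance_eq.symm
  have hle := measure_noncoverage_le (integral_id_eq_zero_of_marginals h₁ h₂) hvar hz hδ
  calc ν.real (noncoverage z δ)
      ≤ ν.real {p | z < p.1} + ν.real {p | z ≤ p.2} := by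
        rw [measureReal_def, measureReal_def, measureReal_def,
          ← ENNReal.toReal_add (measure_ne_top _ _) (measure_ne_top _ _)]
        exact ENNReal.toReal_mono (by finiteness) hle
    _ = 2 * (1 - stdNormalCDF z) := by
        rw [h₁.measureReal_eq measurableSet_Ioi, h₂.measureReal_eq measurableSet_Ici, two_mul]
        exact congrArg₂ _ (measureReal_Ioi_gaussianReal z) (measureReal_Ici_gaussianReal z)

lemma measureReal_noncoverage_zero (h₁ : HasLaw Prod.fst (gaussianReal 0 1) ν)
    (h₂ : HasLaw Prod.snd (gaussianReal 0 1) ν) (hz : 0 ≤ z) :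
    ν.real (noncoverage z 0) = 2 * (1 - stdNormalCDF z) := by
  rw [measureReal_def, measure_noncoverage_zero (integral_id_eq_zero_of_marginals h₁ h₂) hz,
    ENNReal.toReal_add (measure_ne_top _ _) (measure_ne_top _ _), two_mul, ← measureReal_def,
    ← measureReal_def, h₁.measureReal_eq measurableSet_Ioi, h₂.measureReal_eq measurableSet_Ioi]
  exact congrArg₂ _ (measureReal_Ioi_gaussianReal z) (measureReal_Ioi_gaussianReal z)

end StandardNormalPair

section Coverage

variable {Ω : Type*} [MeasurableSpace Ω] {P : Measure Ω} {X Y : Ω → ℝ} {r s z α : ℝ}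

lemma hasGaussianLaw_sub_const {E : Type*} [NormedAddCommGroup E] [NormedSpace ℝ E]
    [CompleteSpace E] [MeasurableSpace E] [BorelSpace E] [SecondCountableTopology E] {X : Ω → E}
    (hX : HasGaussianLaw X P) (c : E) : HasGaussianLaw (fun ω => X ω - c) P := by
  have := hX.isGaussian_map
  refine ⟨?_⟩
  rw [show (fun ω => X ω - c) = (fun x => x - c) ∘ X from rfl,
    ← AEMeasurable.map_map_of_aemeasurable (by fun_prop) hX.aemeasurable]
  infer_instance

lemma hasLaw_standardize (hX : HasGaussianLaw X P) (hr : 0 < r) (hVar : Var[X; P] = r ^ 2) :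
    HasLaw (fun ω => (X ω - P[X]) / r) (gaussianReal 0 1) P := by
  have hlaw : HasLaw X (gaussianReal P[X] Var[X; P].toNNReal) P :=
    ⟨hX.aemeasurable, hX.map_eq_gaussianReal⟩
  convert gaussianReal_div_const (gaussianReal_sub_const hlaw P[X]) r using 2
  · simp
  · ext
    simp [hVar, max_eq_left (sq_nonneg r), hr.ne']

lemma hasGaussianLaw_standardize (hXY : HasGaussianLaw (fun ω => (X ω, Y ω)) P) (r s : ℝ) :
    HasGaussianLaw (fun ω => ((X ω - P[X]) / r, (Y ω - P[Y]) / s)) P := by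
  simpa [div_eq_inv_mul] using (hasGaussianLaw_sub_const hXY (P[X], P[Y])).map_fun
    ((r⁻¹ • ContinuousLinearMap.fst ℝ ℝ ℝ).prod (s⁻¹ • ContinuousLinearMap.snd ℝ ℝ ℝ))

lemma mem_Icc_min_iff_notMem_noncoverage (hr : 0 < r) (hs : 0 < s) (x y z μ η : ℝ) :
    μ ∈ Set.Icc (min (x - r * z) (y - s * z)) (min (x + r * z) (y + s * z)) ↔
      ((x - μ) / r, (y - η) / s) ∉ noncoverage z ((η - μ) / s) := by
  have hx : z < (x - μ) / r ↔ μ < x - r * z := by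
    rw [lt_div_iff₀ hr]; constructor <;> intro <;> linarith
  have hy : z - (η - μ) / s < (y - η) / s ↔ μ < y - s * z := by
    rw [sub_lt_iff_lt_add, ← add_div, lt_div_iff₀ hs]; constructor <;> intro <;> linarith
  have hx' : (x - μ) / r < -z ↔ x + r * z < μ := by
    rw [div_lt_iff₀ hr]; constructor <;> intro <;> linarith
  have hy' : (y - η) / s < -(z + (η - μ) / s) ↔ y + s * z < μ := by
    rw [neg_add', lt_sub_iff_add_lt, ← add_div, div_lt_iff₀ hs]; constructor <;> intro <;> linarith
  simp only [noncoverage, Set.mem_ofPred_eq, hx, hy, hx', hy', Set.mem_Icc, min_le_iff, le_min_iff]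
  grind

theorem coverage_Icc_min (hXY : HasGaussianLaw (fun ω => (X ω, Y ω)) P) (hr : 0 < r) (hs : 0 < s)
    (hX : Var[X; P] = r ^ 2) (hY : Var[Y; P] = s ^ 2) (hα : α ≤ 1)
    (hz : stdNormalCDF z = 1 - α / 2) (hbias : P[X] ≤ P[Y]) :
    1 - α ≤ P.real {ω | P[X] ∈
      Set.Icc (min (X ω - r * z) (Y ω - s * z)) (min (X ω + r * z) (Y ω + s * z))} ∧
    (P[X] = P[Y] → P.real {ω | P[X] ∈
      Set.Icc (min (X ω - r * z) (Y ω - s * z)) (min (X ω + r * z) (Y ω + s * z))} = 1 - α) := by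
  have hz0 : 0 ≤ z := nonneg_of_half_le_stdNormalCDF (by linarith)
  have hU := hasLaw_standardize hXY.fst hr hX
  have hW := hasLaw_standardize hXY.snd hs hY
  have hUW := hasGaussianLaw_standardize hXY r s
  have := hUW.isGaussian_map
  have := hXY.isProbabilityMeasure
  set f := fun ω => ((X ω - P[X]) / r, (Y ω - P[Y]) / s)
  have hf : HasLaw f (P.map f) P := ⟨hUW.aemeasurable, rfl⟩
  have hfst : HasLaw Prod.fst (gaussianReal 0 1) (P.map f) :=
    .comp_of_hasLaw_comp measurable_fst.aemeasurable hf .id hU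
  have hsnd : HasLaw Prod.snd (gaussianReal 0 1) (P.map f) :=
    .comp_of_hasLaw_comp measurable_snd.aemeasurable hf .id hW
  have hcover : P.real {ω | P[X] ∈
      Set.Icc (min (X ω - r * z) (Y ω - s * z)) (min (X ω + r * z) (Y ω + s * z))} =
      1 - (P.map f).real (noncoverage z ((P[Y] - P[X]) / s)) := by
    have hmeas := measurableSet_noncoverage z ((P[Y] - P[X]) / s)
    simp only [mem_Icc_min_iff_notMem_noncoverage hr hs _ _ _ _ P[Y]]
    rw [← probReal_compl_eq_one_sub hmeas]
    exact hf.measureReal_eq hmeas.compl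
  rw [hcover]
  refine ⟨?_, fun heq => ?_⟩
  · have hδ : 0 ≤ (P[Y] - P[X]) / s := div_nonneg (sub_nonneg.2 hbias) hs.le
    linarith [measureReal_noncoverage_le hfst hsnd hz0 hδ]
  · rw [heq, sub_self, zero_div, measureReal_noncoverage_zero hfst hsnd hz0, hz]
    ring

lemma neg_mem_Icc_min_iff (μ x y u v : ℝ) :
    -μ ∈ Set.Icc (min (-x - u) (-y - v)) (min (-x + u) (-y + v)) ↔
      μ ∈ Set.Icc (max (x - u) (y - v)) (max (x + u) (y + v)) := by
  simp only [Set.mem_Icc, min_le_iff, le_min_iff, max_le_iff, le_max_iff]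
  grind

theorem coverage_Icc_max (hXY : HasGaussianLaw (fun ω => (X ω, Y ω)) P) (hr : 0 < r) (hs : 0 < s)
    (hX : Var[X; P] = r ^ 2) (hY : Var[Y; P] = s ^ 2) (hα : α ≤ 1)
    (hz : stdNormalCDF z = 1 - α / 2) (hbias : P[Y] ≤ P[X]) :
    1 - α ≤ P.real {ω | P[X] ∈
      Set.Icc (max (X ω - r * z) (Y ω - s * z)) (max (X ω + r * z) (Y ω + s * z))} ∧
    (P[X] = P[Y] → P.real {ω | P[X] ∈
      Set.Icc (max (X ω - r * z) (Y ω - s * z)) (max (X ω + r * z) (Y ω + s * z))} = 1 - α) := by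
  have hneg := coverage_Icc_min (X := fun ω => -X ω) (Y := fun ω => -Y ω) (z := z) (α := α)
    (hXY.fun_neg) hr hs (by rwa [variance_fun_neg]) (by rwa [variance_fun_neg]) hα hz
    (by rw [integral_neg, integral_neg]; exact neg_le_neg hbias)
  simpa only [integral_neg, neg_inj, neg_mem_Icc_min_iff] using hneg

end Coverage

/-- The inequality-imposed confidence interval, computed from the values `x`, `y` and `γ` of the
unrestricted estimator, of the equality-imposed estimator and of the estimated constraint, the
standard errors `r` and `s` of the two estimators, the threshold `c` and the normal quantile `z`. -/
noncomputable def iici (x y γ r s c z : ℝ) : Set ℝ :=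
  Set.Icc (if γ ≤ c then x - r * z else y - s * z) (if γ ≤ -c then x + r * z else y + s * z)

section IICI

variable {x γ ρ r s c u v z : ℝ}

lemma ite_le_eq_min (hρ : 0 ≤ ρ) (hc : ρ * c = u - v) :
    (if γ ≤ c then x - u else x - ρ * γ - v) = min (x - u) (x - ρ * γ - v) := by
  split_ifs with h
  · exact (min_eq_left (by linarith [mul_le_mul_of_nonneg_left h hρ])).symm
  · exact (min_eq_right (by linarith [mul_le_mul_of_nonneg_left (not_le.1 h).le hρ])).symm

lemma ite_le_eq_max (hρ : ρ ≤ 0) (hc : ρ * c = u - v) :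
    (if γ ≤ c then x - u else x - ρ * γ - v) = max (x - u) (x - ρ * γ - v) := by
  split_ifs with h
  · exact (max_eq_left (by linarith [mul_le_mul_of_nonpos_left h hρ])).symm
  · exact (max_eq_right (by linarith [mul_le_mul_of_nonpos_left (not_le.1 h).le hρ])).symm

lemma iici_eq_Icc_min (hρ : 0 ≤ ρ) (hc : ρ * c = (r - s) * z) :
    iici x (x - ρ * γ) γ r s c z =
      Set.Icc (min (x - r * z) (x - ρ * γ - s * z)) (min (x + r * z) (x - ρ * γ + s * z)) := by
  have hlower := ite_le_eq_min (x := x) (γ := γ) hρ (hc.trans (sub_mul r s z))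
  have hupper := ite_le_eq_min (x := x) (γ := γ) (c := -c) (u := -(r * z)) (v := -(s * z)) hρ
    (by linarith)
  simp only [sub_neg_eq_add] at hupper
  rw [iici, hlower, hupper]

lemma iici_eq_Icc_max (hρ : ρ ≤ 0) (hc : ρ * c = (r - s) * z) :
    iici x (x - ρ * γ) γ r s c z =
      Set.Icc (max (x - r * z) (x - ρ * γ - s * z)) (max (x + r * z) (x - ρ * γ + s * z)) := by
  have hlower := ite_le_eq_max (x := x) (γ := γ) hρ (hc.trans (sub_mul r s z))
  have hupper := ite_le_eq_max (x := x) (γ := γ) (c := -c) (u := -(r * z)) (v := -(s * z)) hρ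
    (by linarith)
  simp only [sub_neg_eq_add] at hupper
  rw [iici, hlower, hupper]

theorem coverage_iici {Ω : Type*} [MeasurableSpace Ω] {P : Measure Ω} {X G : Ω → ℝ} {α : ℝ}
    (hXG : HasGaussianLaw (fun ω => (X ω, G ω)) P) (hr : 0 < r) (hs : 0 < s)
    (hX : Var[X; P] = r ^ 2) (hY : Var[fun ω => X ω - ρ * G ω; P] = s ^ 2) (hα : α ≤ 1)
    (hz : stdNormalCDF z = 1 - α / 2) (hG : P[G] ≤ 0) (hc : ρ * c = (r - s) * z) :
    1 - α ≤ P.real {ω | P[X] ∈ iici (X ω) (X ω - ρ * G ω) (G ω) r s c z} ∧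
    (P[G] = 0 → P.real {ω | P[X] ∈ iici (X ω) (X ω - ρ * G ω) (G ω) r s c z} = 1 - α) := by
  have hmean : ∫ ω, X ω - ρ * G ω ∂P = P[X] - ρ * P[G] := by
    rw [integral_sub hXG.fst.integrable (hXG.snd.integrable.const_mul ρ), integral_const_mul]
  have hXY : HasGaussianLaw (fun ω => (X ω, X ω - ρ * G ω)) P := by
    simpa using hXG.map_fun ((ContinuousLinearMap.fst ℝ ℝ ℝ).prod
      (ContinuousLinearMap.fst ℝ ℝ ℝ - ρ • ContinuousLinearMap.snd ℝ ℝ ℝ))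
  rcases le_total 0 ρ with hρ | hρ
  · have hcov := coverage_Icc_min hXY hr hs hX hY hα hz
      (by rw [hmean]; linarith [mul_nonpos_of_nonneg_of_nonpos hρ hG])
    simp only [iici_eq_Icc_min hρ hc]
    exact ⟨hcov.1, fun h => hcov.2 (by simp [hmean, h])⟩
  · have hcov := coverage_Icc_max hXY hr hs hX hY hα hz
      (by rw [hmean]; linarith [mul_nonneg_of_nonpos_of_nonpos hρ hG])
    simp only [iici_eq_Icc_max hρ hc]
    exact ⟨hcov.1, fun h => hcov.2 (by simp [hmean, h])⟩

end IICI

section MultivariateGaussian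

variable {ι Ω : Type*} [Fintype ι] [MeasurableSpace Ω] {P : Measure Ω}
  {X : Ω → EuclideanSpace ℝ ι} {m : EuclideanSpace ℝ ι} {S : Matrix ι ι ℝ}

lemma dotProduct_eq_innerSL (x : ι → ℝ) (y : EuclideanSpace ℝ ι) :
    x ⬝ᵥ y = innerSL ℝ (WithLp.toLp 2 x) y := by
  simp [EuclideanSpace.inner_eq_star_dotProduct, dotProduct_comm]

lemma hasGaussianLaw_dotProduct_prodMk (hX : HasGaussianLaw X P) (x y : ι → ℝ) :
    HasGaussianLaw (fun ω => (x ⬝ᵥ X ω, y ⬝ᵥ X ω)) P := by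
  simp only [dotProduct_eq_innerSL]
  exact hX.map_fun ((innerSL ℝ (WithLp.toLp 2 x)).prod (innerSL ℝ (WithLp.toLp 2 y)))

lemma sq_dotProduct_mulVec_lt {V : Matrix ι ι ℝ} (hV : V.PosDef) {x y : ι → ℝ}
    (hxy : LinearIndependent ℝ ![x, y]) :
    (x ⬝ᵥ V *ᵥ y) ^ 2 < (x ⬝ᵥ V *ᵥ x) * (y ⬝ᵥ V *ᵥ y) := by
  classical
  have hsymm : V.toBilin'.IsSymm := isSymm_toBilin'_iff_isSymm.2 (by simpa using hV.isHermitian)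
  have hpos (v : ι → ℝ) (hv : v ≠ 0) : 0 < V.toBilin' v v := by
    simpa [toBilin'_apply'] using hV.dotProduct_mulVec_pos hv
  simpa only [toBilin'_apply'] using
    (V.toBilin'.apply_sq_lt_iff_linearIndependent_of_symm hpos
      (LinearMap.BilinForm.isSymm_iff.1 hsymm) x y).2 hxy

variable [DecidableEq ι]

lemma integral_dotProduct_of_hasLaw_multivariateGaussian
    (hX : HasLaw X (multivariateGaussian m S) P) (x : ι → ℝ) :
    ∫ ω, x ⬝ᵥ X ω ∂P = x ⬝ᵥ m := by
  simp only [dotProduct_eq_innerSL]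
  calc ∫ ω, innerSL ℝ (WithLp.toLp 2 x) (X ω) ∂P
      = ∫ y, innerSL ℝ (WithLp.toLp 2 x) y ∂multivariateGaussian m S :=
        hX.integral_comp (by fun_prop)
    _ = innerSL ℝ (WithLp.toLp 2 x) m := by
        rw [ContinuousLinearMap.integral_comp_id_comm IsGaussian.integrable_id,
          integral_id_multivariateGaussian]

lemma covariance_dotProduct_of_hasLaw_multivariateGaussian
    (hX : HasLaw X (multivariateGaussian m S) P) (hS : S.PosSemidef) (x y : ι → ℝ) :
    cov[fun ω => x ⬝ᵥ X ω, fun ω => y ⬝ᵥ X ω; P] = x ⬝ᵥ S *ᵥ y := by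
  simp only [dotProduct_eq_innerSL x (X _), dotProduct_eq_innerSL y (X _)]
  rw [hX.covariance_fun_comp (by fun_prop) (by fun_prop)]
  exact (covarianceBilin_apply_eq_cov IsGaussian.memLp_two_id _ _).symm.trans
    (covarianceBilin_multivariateGaussian hS _ _)

lemma variance_dotProduct_of_hasLaw_multivariateGaussian
    (hX : HasLaw X (multivariateGaussian m S) P) (hS : S.PosSemidef) (x : ι → ℝ) :
    Var[fun ω => x ⬝ᵥ X ω; P] = x ⬝ᵥ S *ᵥ x := by
  rw [← covariance_dotProduct_of_hasLaw_multivariateGaussian hX hS,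
    covariance_self (hasGaussianLaw_dotProduct_prodMk hX.hasGaussianLaw x x).fst.aemeasurable]

lemma map_pi_gaussianReal_eq_multivariateGaussian {κ : Type*} [Fintype κ] (m : EuclideanSpace ℝ ι)
    (A : Matrix ι κ ℝ) :
    (Measure.pi fun _ : κ => gaussianReal 0 1).map (fun w => m + WithLp.toLp 2 (A *ᵥ w)) =
      multivariateGaussian m (A * Aᵀ) := by
  classical
  have hS : (A * Aᵀ).PosSemidef := by simpa using posSemidef_self_mul_conjTranspose A
  set L := (toEuclideanLin A).toContinuousLinearMap
  have hL : (fun w => m + WithLp.toLp 2 (A *ᵥ w)) = (fun x => m + x) ∘ L ∘ WithLp.toLp 2 := by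
    ext w
    simp [L]
  have hadj (x : EuclideanSpace ℝ ι) : L.adjoint x = WithLp.toLp 2 (Aᵀ *ᵥ x) := by
    rw [← conjTranspose_eq_transpose_of_trivial, ← toLpLin_apply,
      toEuclideanLin_conjTranspose_eq_adjoint, LinearMap.adjoint_eq_toCLM_adjoint]
    rfl
  rw [hL, ← Measure.map_map (by fun_prop) (by fun_prop),
    ← Measure.map_map (by fun_prop) (by fun_prop), map_pi_eq_stdGaussian]
  refine IsGaussian.ext ?_ ?_
  · rw [integral_map (by fun_prop) (by fun_prop), integral_id_multivariateGaussian']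
    simp only [id]
    rw [integral_add (integrable_const m) IsGaussian.integrable_fun_id]
    simp [L.integral_id_map IsGaussian.integrable_id]
  · ext x y
    rw [covarianceBilin_map_const_add, covarianceBilin_map IsGaussian.memLp_two_id,
      covarianceBilin_stdGaussian, covarianceBilin_multivariateGaussian hS, hadj, hadj]
    rw [← dotProduct_eq_innerSL, mulVec_transpose, ← dotProduct_mulVec, mulVec_mulVec]

end MultivariateGaussian

section Regression

variable {Ω : Type*} [MeasurableSpace Ω] {P : Measure Ω} {X G : Ω → ℝ}

lemma variance_sub_regression_mul [IsFiniteMeasure P] (hX : MemLp X 2 P) (hG : MemLp G 2 P) :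
    Var[fun ω => X ω - cov[X, G; P] / Var[G; P] * G ω; P] =
      Var[X; P] - cov[X, G; P] ^ 2 / Var[G; P] := by
  rw [variance_fun_sub hX (hG.const_mul _), covariance_const_mul_right, variance_const_mul]
  rcases eq_or_ne Var[G; P] 0 with h | h
  · simp [h]
  · field_simp
    ring

theorem coverage_iici_regression {r s c z α : ℝ} (hXG : HasGaussianLaw (fun ω => (X ω, G ω)) P)
    (hcorr : cov[X, G; P] ^ 2 < Var[X; P] * Var[G; P]) (hr : r = √Var[X; P])
    (hs : s = √(Var[X; P] - cov[X, G; P] ^ 2 / Var[G; P])) (hα : α ≤ 1)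
    (hz : stdNormalCDF z = 1 - α / 2) (hG : P[G] ≤ 0)
    (hc : cov[X, G; P] / Var[G; P] * c = (r - s) * z) :
    1 - α ≤ P.real {ω | P[X] ∈
      iici (X ω) (X ω - cov[X, G; P] / Var[G; P] * G ω) (G ω) r s c z} ∧
    (P[G] = 0 → P.real {ω | P[X] ∈
      iici (X ω) (X ω - cov[X, G; P] / Var[G; P] * G ω) (G ω) r s c z} = 1 - α) := by
  have := hXG.isProbabilityMeasure
  have hprod : 0 < Var[X; P] * Var[G; P] := (sq_nonneg _).trans_lt hcorr
  have hVarX : 0 < Var[X; P] := pos_of_mul_pos_left hprod (variance_nonneg G P)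
  have hVarG : 0 < Var[G; P] := pos_of_mul_pos_right hprod (variance_nonneg X P)
  have hres : 0 < Var[X; P] - cov[X, G; P] ^ 2 / Var[G; P] :=
    sub_pos.2 ((div_lt_iff₀ hVarG).2 hcorr)
  refine coverage_iici hXG (hr ▸ Real.sqrt_pos.2 hVarX) (hs ▸ Real.sqrt_pos.2 hres) ?_ ?_
    hα hz hG hc
  · rw [hr, Real.sq_sqrt hVarX.le]
  · rw [variance_sub_regression_mul hXG.fst.memLp_two hXG.snd.memLp_two, hs, Real.sq_sqrt hres.le]

lemma regression_mul_threshold {p w r s z : ℝ} (hw : w ≠ 0) (hrs : p = 0 → r = s) :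
    p / w * (if p ≠ 0 then p⁻¹ * w * (r - s) * z else 0) = (r - s) * z := by
  rcases eq_or_ne p 0 with hp | hp
  · simp [hp, hrs hp]
  · simp only [if_pos hp]
    field_simp

theorem coverage_iici_dotProduct {ι : Type*} [Fintype ι] [DecidableEq ι] {S : Matrix ι ι ℝ}
    (hS : S.PosSemidef) {θhat : Ω → EuclideanSpace ℝ ι} {θ₀ : EuclideanSpace ℝ ι}
    (hθhat : HasLaw θhat (multivariateGaussian θ₀ S) P) {a e : ι → ℝ}
    (hae : (e ⬝ᵥ S *ᵥ a) ^ 2 < (e ⬝ᵥ S *ᵥ e) * (a ⬝ᵥ S *ᵥ a)) {b r s c z α : ℝ}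
    (hr : r = √(e ⬝ᵥ S *ᵥ e))
    (hs : s = √(e ⬝ᵥ S *ᵥ e - (e ⬝ᵥ S *ᵥ a) ^ 2 / (a ⬝ᵥ S *ᵥ a))) (hα : α ≤ 1)
    (hz : stdNormalCDF z = 1 - α / 2) (hθ₀ : a ⬝ᵥ θ₀ + b ≤ 0)
    (hc : (e ⬝ᵥ S *ᵥ a) / (a ⬝ᵥ S *ᵥ a) * c = (r - s) * z) :
    1 - α ≤ P.real {ω | e ⬝ᵥ θ₀ ∈ iici (e ⬝ᵥ θhat ω)
      (e ⬝ᵥ θhat ω - (e ⬝ᵥ S *ᵥ a) / (a ⬝ᵥ S *ᵥ a) * (a ⬝ᵥ θhat ω + b))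
      (a ⬝ᵥ θhat ω + b) r s c z} ∧
    (a ⬝ᵥ θ₀ + b = 0 → P.real {ω | e ⬝ᵥ θ₀ ∈ iici (e ⬝ᵥ θhat ω)
      (e ⬝ᵥ θhat ω - (e ⬝ᵥ S *ᵥ a) / (a ⬝ᵥ S *ᵥ a) * (a ⬝ᵥ θhat ω + b))
      (a ⬝ᵥ θhat ω + b) r s c z} = 1 - α) := by
  have := hθhat.isProbabilityMeasure
  have hpair := hasGaussianLaw_dotProduct_prodMk hθhat.hasGaussianLaw e a
  have hXG : HasGaussianLaw (fun ω => (e ⬝ᵥ θhat ω, a ⬝ᵥ θhat ω + b)) P := by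
    simpa using hasGaussianLaw_sub_const hpair (0, -b)
  have hmean := integral_dotProduct_of_hasLaw_multivariateGaussian hθhat
  have hVar := variance_dotProduct_of_hasLaw_multivariateGaussian hθhat hS
  have hmeanG : ∫ ω, (a ⬝ᵥ θhat ω + b) ∂P = a ⬝ᵥ θ₀ + b := by
    rw [integral_add hpair.snd.integrable (integrable_const b), hmean, integral_const,
      probReal_univ, one_smul]
  have hVarG : Var[fun ω => a ⬝ᵥ θhat ω + b; P] = a ⬝ᵥ S *ᵥ a := by
    rw [variance_add_const hpair.snd.aemeasurable.aestronglyMeasurable, hVar]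
  have hcov : cov[fun ω => e ⬝ᵥ θhat ω, fun ω => a ⬝ᵥ θhat ω + b; P] = e ⬝ᵥ S *ᵥ a := by
    rw [covariance_add_const_right hpair.snd.integrable,
      covariance_dotProduct_of_hasLaw_multivariateGaussian hθhat hS]
  simpa only [hmeanG, hcov, hVarG, hmean, hVar] using
    coverage_iici_regression (r := r) (s := s) (c := c) hXG (by rwa [hcov, hVar, hVarG])
      (by rwa [hVar]) (by rwa [hcov, hVar, hVarG]) hα hz (by rwa [hmeanG]) (by rwa [hcov, hVarG])

end Regression

theorem stmt12_general {ι Ω : Type*} [Fintype ι] [DecidableEq ι] [MeasurableSpace Ω]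
    {P : Measure Ω} {V : Matrix ι ι ℝ} (hV : V.PosSemidef) {t : ℝ} (ht : 0 < t)
    {θhat : Ω → EuclideanSpace ℝ ι} {θ₀ : EuclideanSpace ℝ ι}
    (hθhat : HasLaw θhat (multivariateGaussian θ₀ (t • V)) P) {a e : ι → ℝ}
    (hae : (e ⬝ᵥ V *ᵥ a) ^ 2 < (e ⬝ᵥ V *ᵥ e) * (a ⬝ᵥ V *ᵥ a)) {b α z : ℝ} (hα : α ≤ 1)
    (hz : stdNormalCDF z = 1 - α / 2) (hθ₀ : a ⬝ᵥ θ₀ + b ≤ 0) {shat sddot cddot : ℝ}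
    (hshat : shat = √(t * (e ⬝ᵥ V *ᵥ e)))
    (hsddot : sddot = √(t * (e ⬝ᵥ V *ᵥ e -
      (e ⬝ᵥ V *ᵥ a) * (a ⬝ᵥ V *ᵥ a)⁻¹ * (a ⬝ᵥ V *ᵥ e))))
    (hcddot : cddot = if e ⬝ᵥ V *ᵥ a ≠ 0 then
      (e ⬝ᵥ V *ᵥ a)⁻¹ * (a ⬝ᵥ V *ᵥ a) * (shat - sddot) * z else 0) :
    1 - α ≤ P.real {ω | e ⬝ᵥ θ₀ ∈ iici (e ⬝ᵥ θhat ω)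
      (e ⬝ᵥ (θhat ω - ((a ⬝ᵥ V *ᵥ a)⁻¹ * (a ⬝ᵥ θhat ω + b)) • V *ᵥ a))
      (a ⬝ᵥ θhat ω + b) shat sddot cddot z} ∧
    (a ⬝ᵥ θ₀ + b = 0 → P.real {ω | e ⬝ᵥ θ₀ ∈ iici (e ⬝ᵥ θhat ω)
      (e ⬝ᵥ (θhat ω - ((a ⬝ᵥ V *ᵥ a)⁻¹ * (a ⬝ᵥ θhat ω + b)) • V *ᵥ a))
      (a ⬝ᵥ θhat ω + b) shat sddot cddot z} = 1 - α) := by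
  have hsymm : a ⬝ᵥ V *ᵥ e = e ⬝ᵥ V *ᵥ a := by
    have hVt : V.IsSymm := by simpa using hV.isHermitian
    rw [← dotProduct_transpose_mulVec, hVt.eq]
  have hsmul (x y : ι → ℝ) : x ⬝ᵥ (t • V) *ᵥ y = t * (x ⬝ᵥ V *ᵥ y) := by
    rw [smul_mulVec, dotProduct_smul, smul_eq_mul]
  have hρ : e ⬝ᵥ (t • V) *ᵥ a / (a ⬝ᵥ (t • V) *ᵥ a) = (e ⬝ᵥ V *ᵥ a) / (a ⬝ᵥ V *ᵥ a) := by
    rw [hsmul, hsmul, mul_div_mul_left _ _ ht.ne']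
  have hθdd (ω : Ω) : e ⬝ᵥ (θhat ω - ((a ⬝ᵥ V *ᵥ a)⁻¹ * (a ⬝ᵥ θhat ω + b)) • V *ᵥ a) =
      e ⬝ᵥ θhat ω - (e ⬝ᵥ (t • V) *ᵥ a) / (a ⬝ᵥ (t • V) *ᵥ a) * (a ⬝ᵥ θhat ω + b) := by
    rw [hρ, dotProduct_sub, dotProduct_smul, smul_eq_mul]
    ring
  have hw : a ⬝ᵥ V *ᵥ a ≠ 0 := right_ne_zero_of_mul ((sq_nonneg _).trans_lt hae).ne'
  have hae' : (e ⬝ᵥ (t • V) *ᵥ a) ^ 2 < (e ⬝ᵥ (t • V) *ᵥ e) * (a ⬝ᵥ (t • V) *ᵥ a) := by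
    rw [hsmul, hsmul, hsmul, mul_mul_mul_comm, ← sq, mul_pow]
    exact mul_lt_mul_of_pos_left hae (pow_pos ht 2)
  have hs : sddot = √(e ⬝ᵥ (t • V) *ᵥ e - (e ⬝ᵥ (t • V) *ᵥ a) ^ 2 / (a ⬝ᵥ (t • V) *ᵥ a)) := by
    rw [hsddot, hsymm, sq, mul_div_right_comm, hρ, hsmul, hsmul]
    ring_nf
  have hc : e ⬝ᵥ (t • V) *ᵥ a / (a ⬝ᵥ (t • V) *ᵥ a) * cddot = (shat - sddot) * z := by
    rw [hρ, hcddot]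
    exact regression_mul_threshold hw fun hp => by simp [hshat, hsddot, hp]
  simpa only [hθdd] using coverage_iici_dotProduct (hV.smul ht.le) hθhat hae'
    (hshat.trans (by rw [hsmul])) hs hα hz hθ₀ hc

/-- Theorem 2 (finite-sample validity of the IICI): if θ̂ ~ N(θ₀, V/n) with V positive
definite, g(θ) = a'θ + b with a not a scalar multiple of e₁, and g(θ₀) ≤ 0, then the
inequality-imposed confidence interval [ℓ, u] covers e₁'θ₀ with probability at least
1 − α, with equality if g(θ₀) = 0. The distribution N(θ₀, V/n) is represented as the
law of θ₀ + A·w for w with i.i.d. standard normal coordinates and A·Aᵀ = n⁻¹V. -/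
theorem stmt12 (k n : ℕ) (hk : 0 < k) (hn : 0 < n)
    (V A : Matrix (Fin k) (Fin k) ℝ) (hV : V.PosDef)
    (hA : A * A.transpose = ((n : ℝ)⁻¹) • V)
    (θ₀ a e₁ : Fin k → ℝ) (b α z : ℝ)
    (he₁ : e₁ = fun i : Fin k => if (i : ℕ) = 0 then (1:ℝ) else 0)
    (ha : ∀ c : ℝ, a ≠ c • e₁)
    (hα : α ∈ Set.Icc (0:ℝ) 1)
    (hz : stdNormalCDF z = 1 - α / 2)
    (g : (Fin k → ℝ) → ℝ) (hg : ∀ θ, g θ = a ⬝ᵥ θ + b)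
    (hg0 : g θ₀ ≤ 0)
    (shat sddot cddot : ℝ)
    (hshat : shat = Real.sqrt ((n : ℝ)⁻¹ * (e₁ ⬝ᵥ V.mulVec e₁)))
    (hsddot : sddot = Real.sqrt ((n : ℝ)⁻¹ *
      (e₁ ⬝ᵥ V.mulVec e₁ -
        (e₁ ⬝ᵥ V.mulVec a) * (a ⬝ᵥ V.mulVec a)⁻¹ * (a ⬝ᵥ V.mulVec e₁))))
    (hcddot : cddot = if e₁ ⬝ᵥ V.mulVec a ≠ 0 then
      (e₁ ⬝ᵥ V.mulVec a)⁻¹ * (a ⬝ᵥ V.mulVec a) * (shat - sddot) * z else 0)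
    (θdd : (Fin k → ℝ) → (Fin k → ℝ))
    (hθdd : ∀ θ, θdd θ = θ - ((a ⬝ᵥ V.mulVec a)⁻¹ * g θ) • V.mulVec a)
    (ℓ u : (Fin k → ℝ) → ℝ)
    (hℓ : ∀ θ, ℓ θ = if g θ ≤ cddot then e₁ ⬝ᵥ θ - shat * z
      else e₁ ⬝ᵥ θdd θ - sddot * z)
    (hu : ∀ θ, u θ = if g θ ≤ -cddot then e₁ ⬝ᵥ θ + shat * z
      else e₁ ⬝ᵥ θdd θ + sddot * z)
    (μ : Measure (Fin k → ℝ))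
    (hμ : μ = Measure.map (fun w => θ₀ + A.mulVec w)
      (Measure.pi fun _ : Fin k => gaussianReal 0 1)) :
    1 - α ≤ (μ {θ | ℓ θ ≤ e₁ ⬝ᵥ θ₀ ∧ e₁ ⬝ᵥ θ₀ ≤ u θ}).toReal ∧
    (g θ₀ = 0 → (μ {θ | ℓ θ ≤ e₁ ⬝ᵥ θ₀ ∧ e₁ ⬝ᵥ θ₀ ≤ u θ}).toReal = 1 - α) := by
  have hθhat : HasLaw (WithLp.toLp 2)
      (multivariateGaussian (WithLp.toLp 2 θ₀) ((n : ℝ)⁻¹ • V)) μ := by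
    refine ⟨by fun_prop, ?_⟩
    rw [hμ, Measure.map_map (by fun_prop) (by fun_prop), ← hA,
      ← map_pi_gaussianReal_eq_multivariateGaussian]
    rfl
  have he₁_ne : e₁ ≠ 0 := fun h => by simpa [he₁] using congrFun h ⟨0, hk⟩
  have hindep : LinearIndependent ℝ ![e₁, a] :=
    (LinearIndependent.pair_iff' he₁_ne).2 fun c hc => ha c hc.symm
  simp only [hℓ, hu, hθdd, hg] at hg0 ⊢
  exact stmt12_general hV.posSemidef (inv_pos.2 (Nat.cast_pos.2 hn)) hθhat
    (sq_dotProduct_mulVec_lt hV hindep) hα.2 hz hg0 hshat hsddot hcddot
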